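/- Let n ≥ 1 be an integer and let 0 < p < 1. Then 2^{2n}·n! ≤ C(n,p) ≤ 2^{2n−1}·n!·(8/π)^{1/p}. -/

import Mathlib

open Set Polynomial Nat MeasureTheory ENNReal

/-- `fd 0` belongs to `𝒟ⁿ([a,b])`, with `fd k` its `k`-th derivative: `fd k` exists and is
continuous on `[a,b]` for `0 ≤ k ≤ n-1`, and `fd n` is the derivative of `fd (n-1)` on `(a,b)`. -/
def IsDn (n : ℕ) (a b : ℝ) (fd : ℕ → ℝ → ℝ) : Prop :=
  (∀ k, k + 1 < n → ∀ x ∈ Set.Icc a b, HasDerivWithinAt (fd k) (fd (k + 1) x) (Set.Icc a b) x) ∧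
  ContinuousOn (fd (n - 1)) (Set.Icc a b) ∧
  (∀ x ∈ Set.Ioo a b, HasDerivAt (fd (n - 1)) (fd n x) x)

/-- `m_n(f) = inf_{a<t<b} |f^{(n)}(t)|`. -/
noncomputable def mIoo (n : ℕ) (a b : ℝ) (fd : ℕ → ℝ → ℝ) : ℝ :=
  sInf ((fun t => |fd n t|) '' Set.Ioo a b)

/-- `‖f‖_{p,[a,b]}` for `0 < p < ∞`. -/
noncomputable def Lp (p a b : ℝ) (f : ℝ → ℝ) : ℝ :=
  (∫ t in a..b, |f t| ^ p) ^ (1 / p)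

/-- `‖f‖_{∞,[a,b]}`. -/
noncomputable def Lsup (a b : ℝ) (f : ℝ → ℝ) : ℝ :=
  sSup ((fun t => |f t|) '' Set.Icc a b)

/-- `‖f‖_{p,[a,b]}` for `0 < p ≤ ∞`. -/
noncomputable def pnorm (p : ℝ≥0∞) (a b : ℝ) (f : ℝ → ℝ) : ℝ :=
  if p = ⊤ then Lsup a b f else Lp p.toReal a b f

/-- `D**(n,p,[a,b])`, `p` finite. -/
noncomputable def Dstar (n : ℕ) (p a b : ℝ) : ℝ :=
  sInf { c | ∃ Q : Polynomial ℝ, Q.Monic ∧ Q.natDegree = n ∧ c = Lp p a b (fun x => Q.eval x) }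

/-- `D**(n,∞,[a,b])`. -/
noncomputable def DstarInf (n : ℕ) (a b : ℝ) : ℝ :=
  sInf { c | ∃ Q : Polynomial ℝ, Q.Monic ∧ Q.natDegree = n ∧ c = Lsup a b (fun x => Q.eval x) }

/-- `C(n,p)`, `p` finite. -/
noncomputable def Cnp (n : ℕ) (p : ℝ) : ℝ :=
  sSup { c | ∃ fd : ℕ → ℝ → ℝ, IsDn n 0 1 fd ∧ (∃ x ∈ Set.Icc (0:ℝ) 1, fd 0 x ≠ 0) ∧
    c = mIoo n 0 1 fd / Lp p 0 1 (fd 0) }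

/-- `C(n,∞)`. -/
noncomputable def CnpInf (n : ℕ) : ℝ :=
  sSup { c | ∃ fd : ℕ → ℝ → ℝ, IsDn n 0 1 fd ∧ (∃ x ∈ Set.Icc (0:ℝ) 1, fd 0 x ≠ 0) ∧
    c = mIoo n 0 1 fd / Lsup 0 1 (fd 0) }

/-!
If `|f⁽ⁿ⁾| ≥ m` on `(a, b)`, then `f⁽ⁿ⁾` has constant sign, and by dividing differences one point
at a time one finds `c₁, …, cₙ ∈ [a, b]` with `|f t| ≥ m / n! * |∏ (t - cᵢ)|`. Hence `C(n, p)` is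
`n!` divided by the least `L^p` norm `D**(n, p, [0, 1])` of a monic polynomial of degree `n`, and
only polynomials with all their roots in `[0, 1]` matter.

For such a polynomial `Q`, substitute `t = (1 + cos θ) / 2` in `∫ |Q|^p` and apply Jensen's
inequality to `exp`: every root contributes `∫₀^π log |(1 + cos θ) / 2 - cᵢ| dθ = -2π log 2`
independently of its position, and the Jacobian contributes `∫₀^π log (sin θ) dθ = -π log 2`. This
bounds `D**` from below. For `p ≤ 1` the `L^p` norm is at most the `L¹` norm, which equals `2^{-2n}`
for the Chebyshev polynomial of the second kind, and this bounds `D**` from above.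
-/

section SegmentMoment

/-- The moment `∫₀¹ sʲ h(c + s(t - c)) ds` of `h` along the segment from `c` to `t`. For `j = 0` and
`h = f'` it is the divided difference `(f t - f c) / (t - c)`, extended smoothly across `t = c`, and
differentiating in `t` raises `j` by one. -/
noncomputable def segmentMoment (c : ℝ) (j : ℕ) (h : ℝ → ℝ) (t : ℝ) : ℝ :=
  ∫ s in (0 : ℝ)..1, s ^ j * h (c + s * (t - c))

variable {a b c m : ℝ} {d : ℕ} {f h : ℝ → ℝ}

theorem sub_mul_segmentMoment_deriv (hf : ContDiff ℝ 1 f) (c t : ℝ) :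
    (t - c) * segmentMoment c 0 (deriv f) t = f t - f c := by
  have : Continuous (deriv f) := hf.continuous_deriv le_rfl
  have hderiv : ∀ s, HasDerivAt (fun s ↦ f (c + s * (t - c)))
      ((t - c) * deriv f (c + s * (t - c))) s := fun s ↦ by
    have hline : HasDerivAt (fun s ↦ c + s * (t - c)) (t - c) s := by
      simpa using ((hasDerivAt_id s).mul_const (t - c)).const_add c
    simpa [mul_comm] using!
      ((hf.differentiable one_ne_zero (c + s * (t - c))).hasDerivAt).comp s hline
  simp only [segmentMoment, pow_zero, one_mul, ← intervalIntegral.integral_const_mul]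
  rw [intervalIntegral.integral_eq_sub_of_hasDerivAt (fun s _ ↦ hderiv s)
    (Continuous.intervalIntegrable (by fun_prop) 0 1)]
  simp

theorem continuous_segmentMoment (hh : Continuous h) (c : ℝ) (j : ℕ) :
    Continuous (segmentMoment c j h) := by
  apply intervalIntegral.continuous_parametric_intervalIntegral_of_continuous'
  simp only [Function.uncurry_def]
  fun_prop

theorem hasDerivAt_segmentMoment (hh : ContDiff ℝ 1 h) (c : ℝ) (j : ℕ) (t : ℝ) :
    HasDerivAt (segmentMoment c j h) (segmentMoment c (j + 1) (deriv h) t) t := by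
  have hcont : Continuous h := hh.continuous
  have : Continuous (deriv h) := hh.continuous_deriv le_rfl
  have hderiv : ∀ s x, HasDerivAt (fun x ↦ s ^ j * h (c + s * (x - c)))
      (s ^ (j + 1) * deriv h (c + s * (x - c))) x := fun s x ↦ by
    have hline : HasDerivAt (fun x ↦ c + s * (x - c)) s x := by
      simpa using (((hasDerivAt_id x).sub_const c).const_mul s).const_add c
    refine ((((hh.differentiable one_ne_zero (c + s * (x - c))).hasDerivAt).comp x
      hline).const_mul (s ^ j)).congr_deriv ?_
    ring
  obtain ⟨C, hC⟩ := ((isCompact_closedBall t 1).prod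
      (isCompact_Icc (a := (0 : ℝ)) (b := 1))).exists_bound_of_continuousOn
    (f := fun q : ℝ × ℝ ↦ q.2 ^ (j + 1) * deriv h (c + q.2 * (q.1 - c))) (by fun_prop)
  refine (intervalIntegral.hasDerivAt_integral_of_dominated_loc_of_deriv_le (bound := fun _ ↦ C)
    (Metric.closedBall_mem_nhds t one_pos)
    (.of_forall fun x ↦ Continuous.aestronglyMeasurable (by fun_prop))
    (Continuous.intervalIntegrable (by fun_prop) 0 1)
    (Continuous.aestronglyMeasurable (by fun_prop))
    (.of_forall fun s hs x hx ↦ ?_) intervalIntegrable_const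
    (.of_forall fun s _ x _ ↦ hderiv s x)).2
  rw [uIoc_of_le zero_le_one] at hs
  exact hC (x, s) ⟨hx, hs.1.le, hs.2⟩

theorem deriv_segmentMoment (hh : ContDiff ℝ 1 h) (c : ℝ) (j : ℕ) :
    deriv (segmentMoment c j h) = segmentMoment c (j + 1) (deriv h) :=
  funext fun t ↦ (hasDerivAt_segmentMoment hh c j t).deriv

theorem contDiff_segmentMoment (hh : ContDiff ℝ d h) (c : ℝ) (j : ℕ) :
    ContDiff ℝ d (segmentMoment c j h) := by
  induction d generalizing h j with
  | zero => exact contDiff_zero.2 (continuous_segmentMoment hh.continuous c j)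
  | succ d ih =>
    have hh1 : ContDiff ℝ 1 h := hh.of_le (by norm_cast; omega)
    push_cast at hh ⊢
    refine contDiff_succ_iff_deriv.2
      ⟨fun t ↦ (hasDerivAt_segmentMoment hh1 c j t).differentiableAt, by simp, ?_⟩
    rw [deriv_segmentMoment hh1]
    exact ih (contDiff_succ_iff_deriv.1 hh).2.2 (j + 1)

theorem iteratedDeriv_segmentMoment (hh : ContDiff ℝ d h) (c : ℝ) (j : ℕ) :
    iteratedDeriv d (segmentMoment c j h) = segmentMoment c (j + d) (iteratedDeriv d h) := by
  induction d generalizing h j with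
  | zero => simp
  | succ d ih =>
    have hh1 : ContDiff ℝ 1 h := hh.of_le (by norm_cast; omega)
    push_cast at hh
    rw [iteratedDeriv_succ', iteratedDeriv_succ', deriv_segmentMoment hh1,
      ih (contDiff_succ_iff_deriv.1 hh).2.2, add_right_comm, add_assoc]

theorem monotoneOn_segmentMoment (hc : c ∈ Icc a b) (hh : Continuous h)
    (hmono : MonotoneOn h (Icc a b)) (j : ℕ) : MonotoneOn (segmentMoment c j h) (Icc a b) := by
  intro x hx y hy hxy
  refine intervalIntegral.integral_mono_on zero_le_one
    (Continuous.intervalIntegrable (by fun_prop) _ _)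
    (Continuous.intervalIntegrable (by fun_prop) _ _) fun s hs ↦ ?_
  have hmem : ∀ z ∈ Icc a b, c + s * (z - c) ∈ Icc a b := fun z hz ↦
    (convex_Icc a b).add_smul_sub_mem hc hz hs
  have hs0 : 0 ≤ s := hs.1
  gcongr
  exact hmono (hmem x hx) (hmem y hy) (by gcongr)

theorem segmentMoment_sub_const_mul (hh : Continuous h) (c m t : ℝ) (j : ℕ) :
    segmentMoment c j (fun x ↦ h x - m * x) t =
      segmentMoment c j h t - m / (j + 2) * t - m * c * (1 / (j + 1) - 1 / (j + 2)) := by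
  have hsplit : ∀ s : ℝ, s ^ j * (h (c + s * (t - c)) - m * (c + s * (t - c))) =
      s ^ j * h (c + s * (t - c)) - (m * c * s ^ j + m * (t - c) * s ^ (j + 1)) := fun s ↦ by ring
  simp only [segmentMoment, hsplit]
  rw [intervalIntegral.integral_sub (Continuous.intervalIntegrable (by fun_prop) _ _)
      (Continuous.intervalIntegrable (by fun_prop) _ _),
    intervalIntegral.integral_add (Continuous.intervalIntegrable (by fun_prop) _ _)
      (Continuous.intervalIntegrable (by fun_prop) _ _),
    intervalIntegral.integral_const_mul, intervalIntegral.integral_const_mul, integral_pow,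
    integral_pow]
  push_cast
  simp only [one_pow, ne_eq, Nat.add_eq_zero_iff, one_ne_zero, and_false, not_false_eq_true,
    zero_pow, sub_zero]
  ring

theorem monotoneOn_segmentMoment_sub_mul (hc : c ∈ Icc a b) (hh : Continuous h)
    (hmono : MonotoneOn (fun t ↦ h t - m * t) (Icc a b)) (j : ℕ) :
    MonotoneOn (fun t ↦ segmentMoment c j h t - m / (j + 2) * t) (Icc a b) := by
  intro x hx y hy hxy
  have := monotoneOn_segmentMoment hc (by fun_prop) hmono j hx hy hxy
  simp only [segmentMoment_sub_const_mul hh] at this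
  linarith

end SegmentMoment

section Comparison

variable {a b m : ℝ} {d n : ℕ} {f : ℝ → ℝ} {fd : ℕ → ℝ → ℝ}

theorem exists_forall_abs_sub_le_abs (hab : a ≤ b) (hf : ContinuousOn f (Icc a b)) :
    ∃ c ∈ Icc a b, ∀ t ∈ Icc a b, |f t - f c| ≤ |f t| := by
  obtain ⟨u, v, himage⟩ : ∃ u v, f '' Icc a b = Icc u v := ⟨_, _, hf.image_Icc hab⟩
  have huv : u ≤ v := nonempty_Icc.1 (himage ▸ (nonempty_Icc.2 hab).image f)
  -- The value `f c` is the point of the range `[u, v]` of `f` nearest to `0`.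
  obtain ⟨c, hc, hfc⟩ : max u (min v 0) ∈ f '' Icc a b := by
    rw [himage]
    exact ⟨le_max_left _ _, max_le huv (min_le_left _ _)⟩
  refine ⟨c, hc, fun t ht ↦ ?_⟩
  have hft : f t ∈ Icc u v := himage ▸ mem_image_of_mem f ht
  rw [hfc]
  grind

theorem mul_abs_sub_le_abs_sub_of_monotoneOn {s : Set ℝ} {x y : ℝ}
    (hmono : MonotoneOn (fun t ↦ f t - m * t) s) (hx : x ∈ s) (hy : y ∈ s) :
    m * |x - y| ≤ |f x - f y| := by
  wlog hyx : y ≤ x generalizing x y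
  · rw [abs_sub_comm x, abs_sub_comm (f x)]
    exact this hy hx (le_of_not_ge hyx)
  have hle : f y - m * y ≤ f x - m * x := hmono hy hx hyx
  rw [abs_of_nonneg (sub_nonneg.2 hyx)]
  exact le_abs.2 (.inl (by linarith))

theorem exists_abs_prod_sub_le_of_monotoneOn_iteratedDeriv (hab : a ≤ b)
    (hf : ContDiff ℝ d f)
    (hmono : MonotoneOn (fun t ↦ iteratedDeriv d f t - m * t) (Icc a b)) :
    ∃ c : Fin (d + 1) → ℝ, (∀ i, c i ∈ Icc a b) ∧
      ∀ t ∈ Icc a b, m / ((d + 1)! : ℝ) * |∏ i, (t - c i)| ≤ |f t| := by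
  induction d generalizing f m with
  | zero =>
    obtain ⟨c, hc, hle⟩ := exists_forall_abs_sub_le_abs hab hf.continuous.continuousOn
    refine ⟨fun _ ↦ c, fun _ ↦ hc, fun t ht ↦ le_trans ?_ (hle t ht)⟩
    simpa [Fin.prod_univ_succ] using
      mul_abs_sub_le_abs_sub_of_monotoneOn (by simpa using hmono) ht hc
  | succ d ih =>
    obtain ⟨c, hc, hle⟩ := exists_forall_abs_sub_le_abs hab hf.continuous.continuousOn
    have hf1 : ContDiff ℝ 1 f := hf.of_le (by norm_cast; omega)
    push_cast at hf
    have hf' : ContDiff ℝ d (deriv f) := (contDiff_succ_iff_deriv.1 hf).2.2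
    have hquot_mono : MonotoneOn (fun t ↦ iteratedDeriv d (segmentMoment c 0 (deriv f)) t -
        m / (d + 2) * t) (Icc a b) := by
      rw [iteratedDeriv_segmentMoment hf', zero_add]
      exact monotoneOn_segmentMoment_sub_mul hc (hf'.continuous_iteratedDeriv d le_rfl)
        (by rwa [← iteratedDeriv_succ']) d
    obtain ⟨z, hz, hquot⟩ := ih (contDiff_segmentMoment hf' c 0) hquot_mono
    refine ⟨Fin.cons c z, Fin.cases hc hz, fun t ht ↦ le_trans ?_ (hle t ht)⟩
    rw [← sub_mul_segmentMoment_deriv hf1, Fin.prod_univ_succ, abs_mul, abs_mul]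
    simp only [Fin.cons_zero, Fin.cons_succ]
    calc m / ((d + 1 + 1)! : ℝ) * (|t - c| * |∏ i, (t - z i)|)
        = |t - c| * (m / (d + 2) / ((d + 1)! : ℝ) * |∏ i, (t - z i)|) := by
          rw [Nat.factorial_succ (d + 1)]
          push_cast
          field_simp
          ring
      _ ≤ |t - c| * |segmentMoment c 0 (deriv f) t| := by gcongr; exact hquot t ht

theorem exists_contDiff_eqOn_Icc (hab : a ≤ b)
    (hderiv : ∀ k < d, ∀ x ∈ Icc a b, HasDerivWithinAt (fd k) (fd (k + 1) x) (Icc a b) x)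
    (hcont : ContinuousOn (fd d) (Icc a b)) :
    ∃ F, ContDiff ℝ d F ∧ EqOn F (fd 0) (Icc a b) ∧ EqOn (iteratedDeriv d F) (fd d) (Icc a b) := by
  induction d generalizing fd with
  | zero =>
    have heq : EqOn (IccExtend hab ((Icc a b).domRestrict (fd 0))) (fd 0) (Icc a b) :=
      fun x hx ↦ IccExtend_of_mem hab _ hx
    refine ⟨_, contDiff_zero.2 ?_, heq, by rwa [iteratedDeriv_zero]⟩
    exact (continuousOn_iff_continuous_domRestrict.1 hcont).Icc_extend'
  | succ d ih =>
    obtain ⟨G, hG, hG0, hGd⟩ := ih (fun k hk ↦ hderiv (k + 1) (by omega)) hcont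
    have hGcont : Continuous G := hG.continuous
    set F : ℝ → ℝ := fun t ↦ fd 0 a + ∫ s in a..t, G s
    have hF : ∀ x, HasDerivAt F (G x) x := fun x ↦
      (hGcont.integral_hasStrictDerivAt a x).hasDerivAt.const_add _
    have hF' : deriv F = G := funext fun x ↦ (hF x).deriv
    refine ⟨F, ?_, fun x hx ↦ ?_, by rwa [iteratedDeriv_succ', hF']⟩
    · push_cast
      exact contDiff_succ_iff_deriv.2 ⟨fun x ↦ (hF x).differentiableAt, by simp, hF'.symm ▸ hG⟩
    · have hftc : ∫ s in a..x, G s = fd 0 x - fd 0 a := by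
        refine intervalIntegral.integral_eq_sub_of_hasDerivAt_of_le hx.1
          (fun y hy ↦ ?_) (fun y hy ↦ ?_) (hGcont.intervalIntegrable _ _)
        · exact (hderiv 0 (by omega) y ⟨hy.1, hy.2.trans hx.2⟩).continuousWithinAt.mono
            (Icc_subset_Icc_right hx.2)
        · have hy' : y ∈ Icc a b := ⟨hy.1.le, hy.2.le.trans hx.2⟩
          rw [hG0 hy']
          exact (hderiv 0 (by omega) y hy').hasDerivAt (Icc_mem_nhds hy.1 (hy.2.trans_le hx.2))
      simp [F, hftc]

theorem IsDn.continuousOn (hn : 1 ≤ n) (h : IsDn n a b fd) : ContinuousOn (fd 0) (Icc a b) := by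
  obtain rfl | hn1 := hn.eq_or_lt
  · exact h.2.1
  · exact fun x hx ↦ (h.1 0 hn1 x hx).continuousWithinAt

theorem IsDn.neg (h : IsDn n a b fd) : IsDn n a b (fun k t ↦ -fd k t) :=
  ⟨fun k hk x hx ↦ (h.1 k hk x hx).neg, h.2.1.neg, fun x hx ↦ (h.2.2 x hx).neg⟩

theorem IsDn.exists_abs_prod_sub_le_of_le (hn : 1 ≤ n) (hab : a ≤ b)
    (h : IsDn n a b fd) (hle : ∀ t ∈ Ioo a b, m ≤ fd n t) :
    ∃ c : Fin n → ℝ, (∀ i, c i ∈ Icc a b) ∧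
      ∀ t ∈ Icc a b, m / (n ! : ℝ) * |∏ i, (t - c i)| ≤ |fd 0 t| := by
  obtain ⟨d, rfl⟩ := Nat.exists_eq_add_of_le' hn
  obtain ⟨hderiv, hcont, hderiv_top⟩ := h
  rw [Nat.add_sub_cancel] at hcont hderiv_top
  have hmono : MonotoneOn (fun t ↦ fd d t - m * t) (Icc a b) := by
    have hderiv_sub : ∀ x ∈ interior (Icc a b),
        HasDerivAt (fun t ↦ fd d t - m * t) (fd (d + 1) x - m) x := fun x hx ↦ by
      rw [interior_Icc] at hx
      simpa using! (hderiv_top x hx).sub ((hasDerivAt_id x).const_mul m)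
    refine monotoneOn_of_deriv_nonneg (convex_Icc a b) (hcont.sub (by fun_prop))
      (fun x hx ↦ (hderiv_sub x hx).differentiableAt.differentiableWithinAt) fun x hx ↦ ?_
    rw [(hderiv_sub x hx).deriv]
    rw [interior_Icc] at hx
    exact sub_nonneg.2 (hle x hx)
  obtain ⟨F, hF, hF0, hFd⟩ := exists_contDiff_eqOn_Icc hab (fun k hk ↦ hderiv k (by omega)) hcont
  obtain ⟨c, hc, hprod⟩ := exists_abs_prod_sub_le_of_monotoneOn_iteratedDeriv (m := m) hab hF
    (hmono.congr fun t ht ↦ by simp only [hFd ht])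
  exact ⟨c, hc, fun t ht ↦ hF0 ht ▸ hprod t ht⟩

theorem mIoo_nonneg (n : ℕ) (a b : ℝ) (fd : ℕ → ℝ → ℝ) : 0 ≤ mIoo n a b fd :=
  Real.sInf_nonneg <| forall_mem_image.2 fun _ _ ↦ abs_nonneg _

theorem mIoo_le_abs {t : ℝ} (ht : t ∈ Ioo a b) : mIoo n a b fd ≤ |fd n t| :=
  csInf_le ⟨0, forall_mem_image.2 fun _ _ ↦ abs_nonneg _⟩ (mem_image_of_mem _ ht)

theorem IsDn.exists_abs_prod_sub_le (hn : 1 ≤ n) (hab : a ≤ b) (h : IsDn n a b fd) :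
    ∃ c : Fin n → ℝ, (∀ i, c i ∈ Icc a b) ∧
      ∀ t ∈ Icc a b, mIoo n a b fd / (n ! : ℝ) * |∏ i, (t - c i)| ≤ |fd 0 t| := by
  rcases (mIoo_nonneg n a b fd).eq_or_lt with hm | hm
  · exact ⟨fun _ ↦ a, fun _ ↦ left_mem_Icc.2 hab, fun t _ ↦ by simp [← hm]⟩
  have hne : ∀ t ∈ Ioo a b, fd n t ≠ 0 := fun t ht ↦ abs_pos.1 (hm.trans_le (mIoo_le_abs ht))
  -- Darboux: a derivative without zeros has constant sign.
  rcases hasDerivWithinAt_forall_lt_or_forall_gt_of_forall_ne (convex_Ioo a b)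
    (fun x hx ↦ (h.2.2 x hx).hasDerivWithinAt) hne with hneg | hpos
  · simpa only [abs_neg] using h.neg.exists_abs_prod_sub_le_of_le hn hab
      fun t ht ↦ abs_of_neg (hneg t ht) ▸ mIoo_le_abs ht
  · exact h.exists_abs_prod_sub_le_of_le hn hab
      fun t ht ↦ abs_of_pos (hpos t ht) ▸ mIoo_le_abs ht

end Comparison

section MonicPolynomials

variable {a b m p q : ℝ} {n : ℕ} {f g : ℝ → ℝ} {fd : ℕ → ℝ → ℝ} {Q : ℝ[X]}

theorem Lp_nonneg (hab : a ≤ b) (p : ℝ) (f : ℝ → ℝ) : 0 ≤ Lp p a b f :=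
  Real.rpow_nonneg (intervalIntegral.integral_nonneg hab fun _ _ ↦ by positivity) _

theorem intervalIntegrable_abs_rpow (hab : a ≤ b) (hp : 0 ≤ p) (hf : ContinuousOn f (Icc a b)) :
    IntervalIntegrable (fun t ↦ |f t| ^ p) volume a b :=
  (hf.abs.rpow_const fun _ _ ↦ .inr hp).intervalIntegrable_of_Icc hab

theorem Lp_mono (hab : a ≤ b) (hp : 0 ≤ p) (hf : ContinuousOn f (Icc a b))
    (hg : ContinuousOn g (Icc a b)) (hle : ∀ t ∈ Icc a b, |f t| ≤ |g t|) :
    Lp p a b f ≤ Lp p a b g := by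
  refine Real.rpow_le_rpow (intervalIntegral.integral_nonneg hab fun _ _ ↦ by positivity) ?_
    (by positivity)
  refine intervalIntegral.integral_mono_on hab (intervalIntegrable_abs_rpow hab hp hf)
    (intervalIntegrable_abs_rpow hab hp hg) fun t ht ↦ ?_
  exact Real.rpow_le_rpow (abs_nonneg _) (hle t ht) hp

theorem Lp_const_mul (hab : a ≤ b) (hp : p ≠ 0) (m : ℝ) (f : ℝ → ℝ) :
    Lp p a b (fun t ↦ m * f t) = |m| * Lp p a b f := by
  simp only [_root_.Lp, abs_mul, Real.mul_rpow (abs_nonneg _) (abs_nonneg _),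
    intervalIntegral.integral_const_mul]
  rw [Real.mul_rpow (by positivity)
    (intervalIntegral.integral_nonneg hab fun _ _ ↦ by positivity), one_div,
    Real.rpow_rpow_inv (abs_nonneg m) hp]

theorem Lp_zero_one_le_of_exponent_le (hp : 0 < p) (hpq : p ≤ q)
    (hf : ContinuousOn f (Icc 0 1)) : Lp p 0 1 f ≤ Lp q 0 1 f := by
  have hq : 0 < q := hp.trans_le hpq
  have hpow : ∀ t, (|f t| ^ p) ^ (q / p) = |f t| ^ q := fun t ↦ by
    rw [← Real.rpow_mul (abs_nonneg _), mul_div_cancel₀ _ hp.ne']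
  have hint : ∀ r : ℝ, 0 < r → IntegrableOn (fun t ↦ |f t| ^ r) (Ioc 0 1) := fun r hr ↦
    (intervalIntegrable_iff_integrableOn_Ioc_of_le zero_le_one).1
      (intervalIntegrable_abs_rpow zero_le_one hr.le hf)
  have hjensen : (∫ t in (0 : ℝ)..1, |f t| ^ p) ^ (q / p) ≤ ∫ t in (0 : ℝ)..1, |f t| ^ q := by
    simpa [average_eq, intervalIntegral.integral_of_le, hpow, Function.comp_def] using
      (convexOn_rpow ((one_le_div hp).2 hpq)).map_set_average_le
        (Real.continuous_rpow_const (by positivity)).continuousOn isClosed_Ici (by simp) (by simp)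
        (.of_forall fun t ↦ Real.rpow_nonneg (abs_nonneg (f t)) p) (hint p hp)
        (by simpa [Function.comp_def, hpow] using hint q hq)
  have hnonneg : 0 ≤ ∫ t in (0 : ℝ)..1, |f t| ^ p :=
    intervalIntegral.integral_nonneg zero_le_one fun _ _ ↦ by positivity
  calc Lp p 0 1 f = ((∫ t in (0 : ℝ)..1, |f t| ^ p) ^ (q / p)) ^ (1 / q) := by
        rw [← Real.rpow_mul hnonneg, div_mul_div_cancel₀' hq.ne', _root_.Lp]
    _ ≤ Lp q 0 1 f := Real.rpow_le_rpow (by positivity) hjensen (by positivity)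

theorem Dstar_le (hab : a ≤ b) (hQ : Q.Monic) : Dstar Q.natDegree p a b ≤ Lp p a b (Q.eval ·) :=
  csInf_le ⟨0, by rintro _ ⟨_, _, _, rfl⟩; exact Lp_nonneg hab _ _⟩ ⟨Q, hQ, rfl, rfl⟩

theorem le_Dstar (hle : ∀ Q : ℝ[X], Q.Monic → Q.natDegree = n → m ≤ Lp p a b (Q.eval ·)) :
    m ≤ Dstar n p a b :=
  le_csInf ⟨_, X ^ n, monic_X_pow n, natDegree_X_pow n, rfl⟩ <| by
    rintro _ ⟨Q, hQ, hdeg, rfl⟩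
    exact hle Q hQ hdeg

theorem Dstar_le_Lp_prod_sub (hab : a ≤ b) (c : Fin n → ℝ) :
    Dstar n p a b ≤ Lp p a b (fun t ↦ ∏ i, (t - c i)) := by
  simpa [eval_prod] using Dstar_le (p := p) hab (monic_prod_X_sub_C c Finset.univ)

theorem IsDn.mIoo_div_mul_Dstar_le (hn : 1 ≤ n) (hp : 0 < p) (hab : a ≤ b)
    (h : IsDn n a b fd) : mIoo n a b fd / (n ! : ℝ) * Dstar n p a b ≤ Lp p a b (fd 0) := by
  have hm : 0 ≤ mIoo n a b fd / (n ! : ℝ) := div_nonneg (mIoo_nonneg n a b fd) (by positivity)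
  obtain ⟨c, -, hprod⟩ := h.exists_abs_prod_sub_le hn hab
  calc mIoo n a b fd / (n ! : ℝ) * Dstar n p a b
      ≤ mIoo n a b fd / (n ! : ℝ) * Lp p a b (fun t ↦ ∏ i, (t - c i)) := by
        gcongr; exact Dstar_le_Lp_prod_sub hab c
    _ = Lp p a b (fun t ↦ mIoo n a b fd / (n ! : ℝ) * ∏ i, (t - c i)) := by
        rw [Lp_const_mul hab hp.ne', abs_of_nonneg hm]
    _ ≤ Lp p a b (fd 0) := Lp_mono hab hp.le (by fun_prop) (h.continuousOn hn) fun t ht ↦ by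
        rw [abs_mul, abs_of_nonneg hm]; exact hprod t ht

theorem isDn_iterate_derivative (hn : 1 ≤ n) (a b : ℝ) (Q : ℝ[X]) :
    IsDn n a b (fun k t ↦ (derivative^[k] Q).eval t) := by
  have hderiv : ∀ k x, HasDerivAt (fun t ↦ (derivative^[k] Q).eval t)
      ((derivative^[k + 1] Q).eval x) x := fun k x ↦ by
    rw [Function.iterate_succ_apply']
    exact (derivative^[k] Q).hasDerivAt x
  obtain ⟨d, rfl⟩ := Nat.exists_eq_add_of_le' hn
  exact ⟨fun k _ x _ ↦ (hderiv k x).hasDerivWithinAt, Polynomial.continuousOn _,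
    fun x _ ↦ hderiv d x⟩

theorem iterate_derivative_natDegree {R : Type*} [Semiring R] (Q : R[X]) :
    derivative^[Q.natDegree] Q = C (Q.natDegree ! • Q.leadingCoeff) := by
  ext k
  rw [coeff_iterate_derivative, coeff_C]
  split_ifs with hk
  · rw [hk, zero_add, Nat.descFactorial_self, leadingCoeff]
  · rw [coeff_eq_zero_of_natDegree_lt (by omega), smul_zero]

theorem mIoo_iterate_derivative (hab : a < b) (hQ : Q.Monic) :
    mIoo Q.natDegree a b (fun k t ↦ (derivative^[k] Q).eval t) = (Q.natDegree ! : ℝ) := by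
  simp only [mIoo, iterate_derivative_natDegree, eval_C, hQ.leadingCoeff, nsmul_one]
  rw [(nonempty_Ioo.2 hab).image_const, csInf_singleton, Nat.abs_cast]

theorem exists_eval_ne_zero_of_ne_zero (hab : a < b) (hQ : Q ≠ 0) :
    ∃ x ∈ Icc a b, Q.eval x ≠ 0 := by
  by_contra! hzero
  exact hQ (eq_zero_of_infinite_isRoot Q ((Icc_infinite hab).mono hzero))

end MonicPolynomials

section LogSine

variable {c p : ℝ} {n : ℕ}

theorem mul_exp_average_le_integral_exp {L : ℝ → ℝ} {u v : ℝ} (huv : u < v)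
    (hL : IntervalIntegrable L volume u v)
    (hexp : IntervalIntegrable (fun θ ↦ Real.exp (L θ)) volume u v) :
    (v - u) * Real.exp ((∫ θ in u..v, L θ) / (v - u)) ≤ ∫ θ in u..v, Real.exp (L θ) := by
  have hpos : 0 < v - u := sub_pos.2 huv
  rw [intervalIntegrable_iff_integrableOn_Ioc_of_le huv.le] at hL hexp
  have hjensen := convexOn_exp.map_set_average_le Real.continuous_exp.continuousOn isClosed_univ
    (by simp [huv]) (by simp) (.of_forall fun _ ↦ mem_univ _) hL hexp
  rwa [← uIoc_of_le huv.le, interval_average_eq_div, interval_average_eq_div,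
    le_div_iff₀' hpos] at hjensen

theorem integral_comp_one_add_cos_div_two_mul_sin {g : ℝ → ℝ} (hg : Continuous g) :
    ∫ θ in (0 : ℝ)..Real.pi, g ((1 + Real.cos θ) / 2) * Real.sin θ =
      2 * ∫ t in (0 : ℝ)..1, g t := by
  have hsubst := intervalIntegral.integral_comp_mul_deriv (a := 0) (b := Real.pi) (g := g)
    (fun θ _ ↦ ((Real.hasDerivAt_cos θ).const_add 1).div_const 2) (by fun_prop) hg
  have hscale : ∀ θ, g ((1 + Real.cos θ) / 2) * Real.sin θ =
      -2 * ((g ∘ fun θ ↦ (1 + Real.cos θ) / 2) θ * (-Real.sin θ / 2)) := fun θ ↦ by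
    simp only [Function.comp_apply]
    ring
  simp only [hscale]
  rw [intervalIntegral.integral_const_mul, hsubst, Real.cos_zero, Real.cos_pi,
    intervalIntegral.integral_symm]
  norm_num

theorem exp_mul_sum_log {ι : Type*} (s : Finset ι) (p : ℝ) {x : ι → ℝ}
    (hx : ∀ i ∈ s, x i ≠ 0) :
    Real.exp (p * ∑ i ∈ s, Real.log (x i)) = |∏ i ∈ s, x i| ^ p := by
  rw [Real.rpow_def_of_pos (abs_pos.2 (Finset.prod_ne_zero_iff.2 hx)), Real.log_abs,
    Real.log_prod hx, mul_comm]

theorem eventually_one_add_cos_div_two_sub_ne_zero (c : ℝ) (s : Set ℝ) :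
    ∀ᶠ θ in Filter.codiscreteWithin s, (1 + Real.cos θ) / 2 - c ≠ 0 := by
  obtain ⟨θ₀, hθ₀⟩ : ∃ θ₀ : ℝ, (1 + Real.cos θ₀) / 2 - c ≠ 0 := by
    by_contra! hzero
    have h0 := hzero 0
    have hpi := hzero Real.pi
    rw [Real.cos_zero] at h0
    rw [Real.cos_pi] at hpi
    linarith
  have hanalytic : AnalyticOnNhd ℝ (fun θ ↦ (1 + Real.cos θ) / 2 - c) univ :=
    fun θ _ ↦ by fun_prop
  exact Filter.codiscreteWithin_mono (subset_univ s) (hanalytic.preimage_zero_mem_codiscrete hθ₀)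

theorem intervalIntegrable_log_one_add_cos_div_two_sub (c u v : ℝ) :
    IntervalIntegrable (fun θ ↦ Real.log ((1 + Real.cos θ) / 2 - c)) volume u v :=
  MeromorphicOn.intervalIntegrable_log (f := fun θ ↦ (1 + Real.cos θ) / 2 - c)
    fun θ _ ↦ by fun_prop

theorem integral_log_sin_add_pi (x : ℝ) :
    ∫ θ in x..x + Real.pi, Real.log (Real.sin θ) = -Real.log 2 * Real.pi := by
  have hperiodic : Function.Periodic (fun θ ↦ Real.log (Real.sin θ)) Real.pi := fun θ ↦ by
    simp only [Real.sin_add_pi, Real.log_neg_eq_log]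
  rw [hperiodic.intervalIntegral_add_eq x 0, zero_add, integral_log_sin_zero_pi]

theorem integral_log_sin_add_log_sin_sub (β : ℝ) :
    ∫ θ in (0 : ℝ)..Real.pi,
      (Real.log (Real.sin (β + θ / 2)) + Real.log (Real.sin (β - θ / 2))) =
      -(2 * Real.log 2 * Real.pi) := by
  have hlogsin : ∀ u v, IntervalIntegrable (fun θ ↦ Real.log (Real.sin θ)) volume u v :=
    fun _ _ ↦ intervalIntegrable_log_sin
  have hadd : IntervalIntegrable (fun θ ↦ Real.log (Real.sin (β + θ / 2))) volume 0 Real.pi :=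
    MeromorphicOn.intervalIntegrable_log (f := fun θ ↦ Real.sin (β + θ / 2)) fun θ _ ↦ by fun_prop
  have hsub : IntervalIntegrable (fun θ ↦ Real.log (Real.sin (β - θ / 2))) volume 0 Real.pi :=
    MeromorphicOn.intervalIntegrable_log (f := fun θ ↦ Real.sin (β - θ / 2)) fun θ _ ↦ by fun_prop
  rw [intervalIntegral.integral_add hadd hsub,
    intervalIntegral.integral_comp_add_div (fun u ↦ Real.log (Real.sin u)) two_ne_zero,
    intervalIntegral.integral_comp_sub_div (fun u ↦ Real.log (Real.sin u)) two_ne_zero,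
    ← smul_add, add_comm, zero_div, add_zero, sub_zero,
    intervalIntegral.integral_add_adjacent_intervals (hlogsin _ _) (hlogsin _ _),
    show β + Real.pi / 2 = β - Real.pi / 2 + Real.pi by ring, integral_log_sin_add_pi, smul_eq_mul]
  ring

theorem integral_log_one_add_cos_div_two_sub (hc : c ∈ Icc 0 1) :
    ∫ θ in (0 : ℝ)..Real.pi, Real.log ((1 + Real.cos θ) / 2 - c) =
      -(2 * Real.log 2 * Real.pi) := by
  obtain ⟨α, rfl⟩ : ∃ α, (1 + Real.cos α) / 2 = c :=
    ⟨Real.arccos (2 * c - 1), by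
      rw [Real.cos_arccos (by linarith [hc.1]) (by linarith [hc.2])]; ring⟩
  have hfactor : ∀ θ, (1 + Real.cos θ) / 2 - (1 + Real.cos α) / 2 =
      Real.sin (α / 2 + θ / 2) * Real.sin (α / 2 - θ / 2) := fun θ ↦ by
    have hprod := Real.cos_sub_cos α θ
    rw [add_div, sub_div] at hprod
    linarith
  rw [← integral_log_sin_add_log_sin_sub (α / 2)]
  refine intervalIntegral.integral_congr_codiscreteWithin ?_
  filter_upwards [eventually_one_add_cos_div_two_sub_ne_zero ((1 + Real.cos α) / 2) _] with θ hθ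
  rw [hfactor, mul_ne_zero_iff] at hθ
  rw [hfactor, Real.log_mul hθ.1 hθ.2]

theorem intervalIntegrable_sum_log_one_add_cos_div_two_sub (c : Fin n → ℝ) (u v : ℝ) :
    IntervalIntegrable (fun θ ↦ ∑ i, Real.log ((1 + Real.cos θ) / 2 - c i)) volume u v := by
  simpa only [Finset.sum_fn] using IntervalIntegrable.sum Finset.univ fun i _ ↦
    intervalIntegrable_log_one_add_cos_div_two_sub (c i) u v

theorem integral_mul_sum_log_add_log_sin (p : ℝ) {c : Fin n → ℝ} (hc : ∀ i, c i ∈ Icc 0 1) :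
    ∫ θ in (0 : ℝ)..Real.pi,
      (p * ∑ i, Real.log ((1 + Real.cos θ) / 2 - c i) + Real.log (Real.sin θ)) =
      -((2 * n * p + 1) * Real.log 2) * Real.pi := by
  have hlogsin : IntervalIntegrable (fun θ ↦ Real.log (Real.sin θ)) volume 0 Real.pi :=
    intervalIntegrable_log_sin
  rw [intervalIntegral.integral_add
      ((intervalIntegrable_sum_log_one_add_cos_div_two_sub c 0 Real.pi).const_mul p) hlogsin,
    intervalIntegral.integral_const_mul, intervalIntegral.integral_finsetSum fun i _ ↦
      intervalIntegrable_log_one_add_cos_div_two_sub (c i) 0 Real.pi, integral_log_sin_zero_pi]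
  simp only [integral_log_one_add_cos_div_two_sub (hc _), Finset.sum_const, Finset.card_univ,
    Fintype.card_fin, nsmul_eq_mul]
  ring

theorem abs_prod_rpow_mul_sin_eventuallyEq_exp (p : ℝ) (c : Fin n → ℝ) :
    (fun θ ↦ |∏ i, ((1 + Real.cos θ) / 2 - c i)| ^ p * Real.sin θ)
      =ᶠ[Filter.codiscreteWithin (uIoc 0 Real.pi)] fun θ ↦
        Real.exp (p * ∑ i, Real.log ((1 + Real.cos θ) / 2 - c i) + Real.log (Real.sin θ)) := by
  have hsin : ∀ᶠ θ in Filter.codiscreteWithin (uIoc 0 Real.pi), Real.sin θ ≠ 0 :=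
    Filter.codiscreteWithin_mono (subset_univ _)
      (Real.analyticOnNhd_sin.preimage_zero_mem_codiscrete (x := Real.pi / 2) (by simp))
  filter_upwards [hsin, Filter.self_mem_codiscreteWithin _, Filter.eventually_all.2 fun i ↦
    eventually_one_add_cos_div_two_sub_ne_zero (c i) _] with θ hsin_ne hθ hne
  rw [uIoc_of_le Real.pi_pos.le] at hθ
  have hsin_pos : 0 < Real.sin θ :=
    (Real.sin_nonneg_of_nonneg_of_le_pi hθ.1.le hθ.2).lt_of_ne' hsin_ne
  rw [Real.exp_add, Real.exp_log hsin_pos, exp_mul_sum_log _ _ fun i _ ↦ hne i]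

theorem le_integral_abs_prod_sub_rpow (hp : 0 ≤ p) {c : Fin n → ℝ} (hc : ∀ i, c i ∈ Icc 0 1) :
    Real.pi / 4 * ((2 ^ (2 * n))⁻¹ : ℝ) ^ p ≤ ∫ t in (0 : ℝ)..1, |∏ i, (t - c i)| ^ p := by
  have hcont : Continuous fun t ↦ |∏ i, (t - c i)| ^ p :=
    Continuous.rpow_const (by fun_prop) fun _ ↦ .inr hp
  have hexp := abs_prod_rpow_mul_sin_eventuallyEq_exp p c
  have hexp_int := IntervalIntegrable.congr_codiscreteWithin (μ := volume) hexp
    (Continuous.intervalIntegrable ((hcont.comp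
      (by fun_prop : Continuous fun θ ↦ (1 + Real.cos θ) / 2)).mul Real.continuous_sin) 0 Real.pi)
  have hjensen := mul_exp_average_le_integral_exp Real.pi_pos
    (((intervalIntegrable_sum_log_one_add_cos_div_two_sub c 0 Real.pi).const_mul p).add
      intervalIntegrable_log_sin) hexp_int
  have hlog : -((2 * n * p + 1) * Real.log 2) =
      Real.log (2 ^ (2 * n))⁻¹ * p - Real.log 2 := by
    rw [Real.log_inv, Real.log_pow]
    push_cast
    ring
  simp only [Function.comp_apply] at hjensen
  rw [integral_mul_sum_log_add_log_sin p hc, sub_zero, mul_div_cancel_right₀ _ Real.pi_ne_zero,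
    ← intervalIntegral.integral_congr_codiscreteWithin hexp,
    integral_comp_one_add_cos_div_two_mul_sin hcont, hlog, Real.exp_sub,
    Real.exp_log two_pos, ← Real.rpow_def_of_pos (by positivity)] at hjensen
  linarith

theorem le_Dstar_zero_one (hn : 1 ≤ n) (hp : 0 < p) :
    (Real.pi / 4) ^ (1 / p) * (2 ^ (2 * n))⁻¹ ≤ Dstar n p 0 1 := by
  refine le_Dstar fun Q hQ hdeg ↦ ?_
  subst hdeg
  obtain ⟨c, hc, hprod⟩ :=
    (isDn_iterate_derivative hn 0 1 Q).exists_abs_prod_sub_le hn zero_le_one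
  rw [mIoo_iterate_derivative one_pos hQ, div_self (by positivity)] at hprod
  simp only [one_mul, Function.iterate_zero, id_eq] at hprod
  calc (Real.pi / 4) ^ (1 / p) * (2 ^ (2 * Q.natDegree))⁻¹
      = (Real.pi / 4 * ((2 ^ (2 * Q.natDegree))⁻¹ : ℝ) ^ p) ^ (1 / p) := by
        rw [Real.mul_rpow (by positivity) (by positivity), one_div p,
          Real.rpow_rpow_inv (by positivity) hp.ne']
    _ ≤ Lp p 0 1 (fun t ↦ ∏ i, (t - c i)) :=
        Real.rpow_le_rpow (by positivity) (le_integral_abs_prod_sub_rpow hp.le hc) (by positivity)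
    _ ≤ Lp p 0 1 (Q.eval ·) :=
        Lp_mono zero_le_one hp.le (by fun_prop) Q.continuousOn hprod

theorem Dstar_zero_one_pos (hn : 1 ≤ n) (hp : 0 < p) : 0 < Dstar n p 0 1 :=
  lt_of_lt_of_le (by positivity) (le_Dstar_zero_one hn hp)

end LogSine

section ChebyshevU

variable {p : ℝ}

/-- The monic Chebyshev polynomial of the second kind of degree `n` on `[0, 1]`: the affine
substitution `t ↦ 2 * t - 1` carries `[0, 1]` to `[-1, 1]`, and `Uₙ (2 * t - 1)` has leading
coefficient `2 ^ (2 * n)`. Among the monic polynomials it minimizes the `L¹` norm on `[0, 1]`. -/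
noncomputable def shiftedMonicU (n : ℕ) : ℝ[X] :=
  C (2 ^ (2 * n) : ℝ)⁻¹ * (Chebyshev.U ℝ n).comp (C 2 * X + C (-1))

theorem natDegree_shiftedMonicU (n : ℕ) : (shiftedMonicU n).natDegree = n := by
  rw [shiftedMonicU, natDegree_C_mul (by positivity), natDegree_comp,
    natDegree_linear two_ne_zero, mul_one, Chebyshev.natDegree_U_natCast]

theorem monic_shiftedMonicU (n : ℕ) : (shiftedMonicU n).Monic := by
  have hlin : (C 2 * X + C (-1) : ℝ[X]).natDegree = 1 := natDegree_linear two_ne_zero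
  rw [Monic, shiftedMonicU, leadingCoeff_mul, leadingCoeff_C,
    leadingCoeff_comp (hlin ▸ one_ne_zero), leadingCoeff_linear two_ne_zero,
    Chebyshev.leadingCoeff_U_natCast, Chebyshev.natDegree_U_natCast, ← pow_add, ← two_mul]
  exact inv_mul_cancel₀ (by positivity)

theorem eval_shiftedMonicU_mul_sin (n : ℕ) (θ : ℝ) :
    (shiftedMonicU n).eval ((1 + Real.cos θ) / 2) * Real.sin θ =
      (2 ^ (2 * n))⁻¹ * Real.sin ((n + 1 : ℕ) * θ) := by
  have hcos : 2 * ((1 + Real.cos θ) / 2) + -1 = Real.cos θ := by ring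
  have hU := Chebyshev.U_real_cos θ n
  push_cast at hU ⊢
  rw [← hU, shiftedMonicU, eval_mul, eval_C, eval_comp, eval_add, eval_mul, eval_C, eval_X,
    eval_C, hcos, mul_assoc]

theorem integral_abs_sin_natCast_mul {N : ℕ} (hN : N ≠ 0) :
    ∫ θ in (0 : ℝ)..Real.pi, |Real.sin (N * θ)| = 2 := by
  have hN' : (N : ℝ) ≠ 0 := Nat.cast_ne_zero.2 hN
  have hperiodic : Function.Periodic (fun θ ↦ |Real.sin θ|) Real.pi := fun θ ↦ by
    simp only [Real.sin_add_pi, abs_neg]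
  have hperiods := hperiodic.intervalIntegral_add_zsmul_eq N 0
    fun _ _ ↦ Continuous.intervalIntegrable (by fun_prop) _ _
  have hperiod : ∫ θ in (0 : ℝ)..Real.pi, |Real.sin θ| = 2 := by
    rw [intervalIntegral.integral_congr fun θ hθ ↦
      abs_of_nonneg (Real.sin_nonneg_of_mem_Icc (uIcc_of_le Real.pi_pos.le ▸ hθ)), integral_sin,
      Real.cos_zero, Real.cos_pi]
    norm_num
  rw [intervalIntegral.integral_comp_mul_left (fun θ ↦ |Real.sin θ|) hN', mul_zero]
  simp only [zero_add, hperiod, zsmul_eq_mul, Int.cast_natCast, smul_eq_mul] at hperiods ⊢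
  rw [hperiods, inv_mul_cancel_left₀ hN']

theorem integral_abs_shiftedMonicU (n : ℕ) :
    ∫ t in (0 : ℝ)..1, |(shiftedMonicU n).eval t| = (2 ^ (2 * n))⁻¹ := by
  have hsubst := integral_comp_one_add_cos_div_two_mul_sin
    (g := fun t ↦ |(shiftedMonicU n).eval t|) (by fun_prop)
  have habs : ∫ θ in (0 : ℝ)..Real.pi,
      |(shiftedMonicU n).eval ((1 + Real.cos θ) / 2)| * Real.sin θ =
      ∫ θ in (0 : ℝ)..Real.pi, (2 ^ (2 * n))⁻¹ * |Real.sin ((n + 1 : ℕ) * θ)| := by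
    refine intervalIntegral.integral_congr fun θ hθ ↦ ?_
    rw [uIcc_of_le Real.pi_pos.le] at hθ
    have hscale : (0 : ℝ) ≤ (2 ^ (2 * n))⁻¹ := by positivity
    rw [← abs_of_nonneg (Real.sin_nonneg_of_mem_Icc hθ), ← abs_mul, eval_shiftedMonicU_mul_sin,
      abs_mul, abs_of_nonneg hscale]
  rw [habs, intervalIntegral.integral_const_mul,
    integral_abs_sin_natCast_mul n.succ_ne_zero] at hsubst
  linarith

theorem Dstar_zero_one_le (n : ℕ) (hp0 : 0 < p) (hp1 : p ≤ 1) :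
    Dstar n p 0 1 ≤ (2 ^ (2 * n))⁻¹ :=
  calc Dstar n p 0 1 ≤ Lp p 0 1 ((shiftedMonicU n).eval ·) := by
        simpa only [natDegree_shiftedMonicU] using
          Dstar_le (p := p) zero_le_one (monic_shiftedMonicU n)
    _ ≤ Lp 1 0 1 ((shiftedMonicU n).eval ·) :=
        Lp_zero_one_le_of_exponent_le hp0 hp1 (shiftedMonicU n).continuousOn
    _ = (2 ^ (2 * n))⁻¹ := by
        simp only [_root_.Lp, Real.rpow_one, div_one, integral_abs_shiftedMonicU]

end ChebyshevU

section Duality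

variable {n : ℕ} {p : ℝ} {fd : ℕ → ℝ → ℝ} {Q : ℝ[X]}

theorem IsDn.mIoo_div_Lp_le (hn : 1 ≤ n) (hp : 0 < p) (h : IsDn n 0 1 fd) :
    mIoo n 0 1 fd / Lp p 0 1 (fd 0) ≤ (n ! : ℝ) / Dstar n p 0 1 := by
  have hD := Dstar_zero_one_pos hn hp
  have hle := h.mIoo_div_mul_Dstar_le hn hp zero_le_one
  rw [div_mul_eq_mul_div, div_le_iff₀ (by positivity), ← le_div_iff₀ hD] at hle
  exact div_le_of_le_mul₀ (Lp_nonneg zero_le_one _ _) (by positivity)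
    (hle.trans_eq (by ring))

theorem factorial_div_Lp_le_Cnp (hn : 1 ≤ Q.natDegree) (hp : 0 < p) (hQ : Q.Monic) :
    (Q.natDegree ! : ℝ) / Lp p 0 1 (Q.eval ·) ≤ Cnp Q.natDegree p := by
  refine le_csSup ⟨Q.natDegree ! / Dstar Q.natDegree p 0 1, ?_⟩
    ⟨_, isDn_iterate_derivative hn 0 1 Q, exists_eval_ne_zero_of_ne_zero one_pos hQ.ne_zero, ?_⟩
  · rintro _ ⟨fd, h, -, rfl⟩
    exact h.mIoo_div_Lp_le hn hp
  · rw [mIoo_iterate_derivative one_pos hQ]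
    rfl

theorem Cnp_eq_factorial_div_Dstar (hn : 1 ≤ n) (hp : 0 < p) :
    Cnp n p = (n ! : ℝ) / Dstar n p 0 1 := by
  have hD := Dstar_zero_one_pos hn hp
  have hfact : (0 : ℝ) < n ! := by positivity
  have hmonic : ∀ Q : ℝ[X], Q.Monic → Q.natDegree = n →
      0 < Lp p 0 1 (Q.eval ·) ∧ (n ! : ℝ) / Lp p 0 1 (Q.eval ·) ≤ Cnp n p := by
    rintro Q hQ rfl
    exact ⟨hD.trans_le (Dstar_le zero_le_one hQ), factorial_div_Lp_le_Cnp hn hp hQ⟩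
  have hC : 0 < Cnp n p := by
    obtain ⟨hLp, hle⟩ := hmonic _ (monic_X_pow n) (natDegree_X_pow n)
    exact (div_pos hfact hLp).trans_le hle
  apply le_antisymm
  · refine csSup_le ⟨_, _, isDn_iterate_derivative hn 0 1 (X ^ n),
      exists_eval_ne_zero_of_ne_zero one_pos (monic_X_pow n).ne_zero, rfl⟩ ?_
    rintro _ ⟨fd, h, -, rfl⟩
    exact h.mIoo_div_Lp_le hn hp
  · rw [div_le_comm₀ hD hC]
    refine le_Dstar fun Q hQ hdeg ↦ ?_
    obtain ⟨hLp, hle⟩ := hmonic Q hQ hdeg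
    exact (div_le_comm₀ hLp hC).1 hle

theorem two_mul_rpow_one_div_le {x : ℝ} (hx : 0 ≤ x) (hp0 : 0 < p) (hp1 : p ≤ 1) :
    2 * x ^ (1 / p) ≤ (2 * x) ^ (1 / p) := by
  rw [Real.mul_rpow zero_le_two hx]
  gcongr
  exact Real.self_le_rpow_of_one_le one_le_two ((one_le_div hp0).2 hp1)

theorem two_pow_mul_factorial_mul_rpow_le (hn : 1 ≤ n) (hp0 : 0 < p) (hp1 : p ≤ 1) :
    2 ^ (2 * n) * (n ! : ℝ) * (4 / Real.pi) ^ (1 / p) ≤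
      2 ^ (2 * n - 1) * (n ! : ℝ) * (8 / Real.pi) ^ (1 / p) :=
  calc 2 ^ (2 * n) * (n ! : ℝ) * (4 / Real.pi) ^ (1 / p)
      = 2 ^ (2 * n - 1) * (n ! : ℝ) * (2 * (4 / Real.pi) ^ (1 / p)) := by
        rw [← pow_sub_one_mul (by omega : 2 * n ≠ 0)]
        ring
    _ ≤ 2 ^ (2 * n - 1) * (n ! : ℝ) * (2 * (4 / Real.pi)) ^ (1 / p) := by
        gcongr
        exact two_mul_rpow_one_div_le (div_nonneg zero_le_four Real.pi_pos.le) hp0 hp1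
    _ = 2 ^ (2 * n - 1) * (n ! : ℝ) * (8 / Real.pi) ^ (1 / p) := by
        rw [← mul_div_assoc]
        norm_num

end Duality

theorem stmt17_general (n : ℕ) (hn : 1 ≤ n) (p : ℝ) (hp : 0 < p) :
    (p ≤ 1 → 2 ^ (2 * n) * (n ! : ℝ) ≤ Cnp n p) ∧
      Cnp n p ≤ 2 ^ (2 * n) * (n ! : ℝ) * (4 / Real.pi) ^ (1 / p) := by
  rw [Cnp_eq_factorial_div_Dstar hn hp]
  refine ⟨fun hp1 ↦ ?_, ?_⟩
  · rw [le_div_iff₀ (Dstar_zero_one_pos hn hp)]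
    calc 2 ^ (2 * n) * (n ! : ℝ) * Dstar n p 0 1
        ≤ 2 ^ (2 * n) * (n ! : ℝ) * (2 ^ (2 * n))⁻¹ := by
          gcongr; exact Dstar_zero_one_le n hp hp1
      _ = n ! := by field_simp
  · calc (n ! : ℝ) / Dstar n p 0 1
        ≤ n ! / ((Real.pi / 4) ^ (1 / p) * (2 ^ (2 * n))⁻¹) := by
          gcongr; exact le_Dstar_zero_one hn hp
      _ = 2 ^ (2 * n) * (n ! : ℝ) * (4 / Real.pi) ^ (1 / p) := by
          rw [← inv_div Real.pi 4, Real.inv_rpow (by positivity)]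
          field_simp

/-- For `0 < p < 1`, one has `2^{2n} n! ≤ C(n,p) ≤ 2^{2n-1} n! (8/π)^{1/p}`. -/
theorem stmt17 (n : ℕ) (hn : 1 ≤ n) (p : ℝ) (hp0 : 0 < p) (hp1 : p < 1) :
    2 ^ (2 * n) * (n ! : ℝ) ≤ Cnp n p ∧
      Cnp n p ≤ 2 ^ (2 * n - 1) * (n ! : ℝ) * (8 / Real.pi) ^ (1 / p) :=
  (stmt17_general n hn p hp0).imp (· hp1.le)
    fun hupper ↦ hupper.trans (two_pow_mul_factorial_mul_rpow_le hn hp0 hp1.le)
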